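/- arXiv:1810.06335 — 3 statements merged into one kernel-verified Lean document; each statement's English description precedes it below -/
import Mathlib

section
/- In the independent lognormal futures model, for every initial energy price x > 0 the map x ↦ ∫∫ g(F^E(x,u))·h(F^I(y,v)) dμ(u,v) is differentiable at x, and its derivative (the energy delta Δ_E) is given by the derivative-free Malliavin-weight formula Δ_E = ∫∫ g(F^E(x,u))·h(F^I(y,v)) · u/(x·σ_E·T) dμ(u,v), i.e. the Malliavin weight is π^{Δ_E}(u) = u/(x σ_E T). -/
open MeasureTheory ProbabilityTheory

lemma gauss_shift (T : ℝ) (hT : 0 < T) (f : ℝ → ℝ) (d : ℝ) :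
    ∫ u, f (u + d) ∂(gaussianReal 0 T.toNNReal)
      = ∫ u, f u * Real.exp (d * u / T - d ^ 2 / (2 * T)) ∂(gaussianReal 0 T.toNNReal) := by
  have hv : T.toNNReal ≠ 0 := by simpa using hT
  rw [integral_gaussianReal_eq_integral_smul hv, integral_gaussianReal_eq_integral_smul hv]
  rw [← integral_sub_right_eq_self
    (fun u => gaussianPDFReal 0 T.toNNReal u • f (u + d)) d]
  congr 1
  ext u
  simp only [sub_add_cancel, smul_eq_mul, gaussianPDFReal, Real.coe_toNNReal T hT.le]
  have : Real.exp (-(u - d - 0) ^ 2 / (2 * T))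
      = Real.exp (-(u - 0) ^ 2 / (2 * T)) * Real.exp (d * u / T - d ^ 2 / (2 * T)) := by
    rw [← Real.exp_add]
    congr 1
    field_simp
    ring
  rw [this]
  ring

lemma gauss_deriv (T : ℝ) (hT : 0 < T) (G : ℝ → ℝ) (hG : Measurable G) (K a : ℝ) (hK : 0 ≤ K)
    (ha : 0 ≤ a) (hGb : ∀ u, |G u| ≤ K * Real.exp (a * |u|)) :
    HasDerivAt (fun d : ℝ => ∫ u, G (u + d) ∂(gaussianReal 0 T.toNNReal))
      (∫ u, G u * (u / T) ∂(gaussianReal 0 T.toNNReal)) 0 := by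
  simp_rw [gauss_shift T hT G]
  have hint : ∀ b : ℝ, Integrable (fun u => Real.exp (b * |u|)) (gaussianReal 0 T.toNNReal) :=
    fun b => integrable_exp_mul_abs (X := fun u : ℝ => u)
      (integrable_exp_mul_gaussianReal b) (integrable_exp_mul_gaussianReal (-b))
  have key := hasDerivAt_integral_of_dominated_loc_of_deriv_le (𝕜 := ℝ)
    (μ := gaussianReal 0 T.toNNReal) (x₀ := (0:ℝ)) (s := Metric.ball 0 1)
    (F := fun d u => G u * Real.exp (d * u / T - d ^ 2 / (2 * T)))
    (F' := fun d u => G u * (Real.exp (d * u / T - d ^ 2 / (2 * T)) * (u / T - d / T)))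
    (bound := fun u => K / T * Real.exp ((a + 1 / T + 1) * |u|))
    (Metric.ball_mem_nhds _ one_pos)
    (Filter.Eventually.of_forall fun d => by
      apply Measurable.aestronglyMeasurable; fun_prop)
    (by
      refine ((hint a).const_mul K).mono' (by apply Measurable.aestronglyMeasurable; fun_prop) ?_
      filter_upwards with u
      simpa using hGb u)
    (by apply Measurable.aestronglyMeasurable; fun_prop)
    (by
      filter_upwards with u d hd
      have hd' : |d| < 1 := by simpa using hd
      rw [Real.norm_eq_abs, abs_mul, abs_mul, Real.abs_exp]
      have e1 : Real.exp (d * u / T - d ^ 2 / (2 * T)) ≤ Real.exp (1 / T * |u|) := by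
        apply Real.exp_le_exp.2
        have h1 : d * u ≤ |u| := by
          calc d * u ≤ |d * u| := le_abs_self _
            _ = |d| * |u| := abs_mul _ _
            _ ≤ 1 * |u| := by gcongr
            _ = |u| := one_mul _
        have h2 : d * u / T ≤ |u| / T := by gcongr
        have h3 : 0 ≤ d ^ 2 / (2 * T) := by positivity
        have h4 : 1 / T * |u| = |u| / T := by ring
        linarith
      have e2 : |u / T - d / T| ≤ Real.exp |u| / T := by
        rw [← sub_div, abs_div, abs_of_pos hT]
        gcongr
        have := abs_sub u d
        have := Real.add_one_le_exp |u|
        linarith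
      calc |G u| * (Real.exp (d * u / T - d ^ 2 / (2 * T)) * |u / T - d / T|)
          ≤ (K * Real.exp (a * |u|)) * (Real.exp (1 / T * |u|) * (Real.exp |u| / T)) := by
            gcongr
            exact hGb u
        _ = K / T * Real.exp ((a + 1 / T + 1) * |u|) := by
            rw [add_mul, add_mul, Real.exp_add, Real.exp_add, one_mul]
            ring)
    ((hint _).const_mul _)
    (by
      filter_upwards with u d hd
      apply HasDerivAt.const_mul
      apply HasDerivAt.exp
      have h1 := (((hasDerivAt_id d).mul_const u).div_const T).sub
        (((hasDerivAt_id d).pow 2).div_const (2 * T))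
      refine h1.congr_deriv ?_
      simp
      field_simp)
  refine key.2.congr_deriv ?_
  simp

lemma energy_one (T s : ℝ) (hT : 0 < T) (hs : 0 < s) (g : ℝ → ℝ) (hg : Measurable g)
    (C : ℝ) (p : ℕ) (hC : 0 ≤ C) (hgb : ∀ z : ℝ, |g z| ≤ C * (1 + |z|) ^ p)
    (x : ℝ) (hx : 0 < x) :
    HasDerivAt (fun x' : ℝ => ∫ u, g (x' * Real.exp (s * u - s ^ 2 * T / 2))
        ∂(gaussianReal 0 T.toNNReal))
      (∫ u, g (x * Real.exp (s * u - s ^ 2 * T / 2)) * (u / (x * s * T))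
        ∂(gaussianReal 0 T.toNNReal)) x := by
  have hb : ∀ u, |g (x * Real.exp (s * u - s ^ 2 * T / 2))|
      ≤ (C * (1 + x) ^ p) * Real.exp ((p * s) * |u|) := by
    intro u
    have h1 : 1 + |x * Real.exp (s * u - s ^ 2 * T / 2)| ≤ (1 + x) * Real.exp (s * |u|) := by
      rw [abs_of_pos (by positivity)]
      have h2 : Real.exp (s * u - s ^ 2 * T / 2) ≤ Real.exp (s * |u|) := by
        apply Real.exp_le_exp.2
        have := mul_le_mul_of_nonneg_left (le_abs_self u) hs.le
        have : 0 ≤ s ^ 2 * T / 2 := by positivity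
        linarith
      have h3 : 1 ≤ Real.exp (s * |u|) := Real.one_le_exp (by positivity)
      have := mul_le_mul_of_nonneg_left h2 hx.le
      linarith
    calc _ ≤ C * (1 + |x * Real.exp (s * u - s ^ 2 * T / 2)|) ^ p := hgb _
      _ ≤ C * ((1 + x) * Real.exp (s * |u|)) ^ p := by gcongr
      _ = _ := by rw [mul_pow, ← Real.exp_nat_mul]; ring_nf
  have key := gauss_deriv T hT (fun u => g (x * Real.exp (s * u - s ^ 2 * T / 2)))
    (by fun_prop) (C * (1 + x) ^ p) (p * s) (by positivity) (by positivity) hb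
  have hl : HasDerivAt (fun x' : ℝ => Real.log (x' / x) / s) (1 / (x * s)) x := by
    have h1 := (((hasDerivAt_id x).div_const x).log (by simp [hx.ne'])).div_const s
    refine h1.congr_deriv ?_
    simp
    field_simp
  have h0 : Real.log (x / x) / s = 0 := by simp [hx.ne']
  have hcomp := HasDerivAt.comp x (h₂ := fun d : ℝ => ∫ u,
    g (x * Real.exp (s * (u + d) - s ^ 2 * T / 2)) ∂(gaussianReal 0 T.toNNReal))
    (h := fun x' : ℝ => Real.log (x' / x) / s) (by rw [h0]; exact key) hl
  have heq : (fun x' : ℝ => ∫ u, g (x' * Real.exp (s * u - s ^ 2 * T / 2))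
        ∂(gaussianReal 0 T.toNNReal)) =ᶠ[nhds x] ((fun d : ℝ => ∫ u,
    g (x * Real.exp (s * (u + d) - s ^ 2 * T / 2)) ∂(gaussianReal 0 T.toNNReal)) ∘
      (fun x' : ℝ => Real.log (x' / x) / s)) := by
    filter_upwards [lt_mem_nhds hx] with x' hx'
    simp only [Function.comp]
    congr 1
    ext u
    congr 1
    have : s * (u + Real.log (x' / x) / s) - s ^ 2 * T / 2
        = Real.log (x' / x) + (s * u - s ^ 2 * T / 2) := by field_simp; ring
    rw [this, Real.exp_add, Real.exp_log (by positivity)]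
    field_simp
  refine (hcomp.congr_of_eventuallyEq heq).congr_deriv ?_
  rw [← integral_mul_const]
  congr 1
  ext u
  field_simp


/-- **Energy delta in the independent lognormal futures model.**
For every initial energy price `x > 0`, the quanto option price
`x ↦ ∫∫ g(Fᴱ(x,u)) h(Fᴵ(y,v)) dμ(u,v)` is differentiable at `x` and its derivative is
given by the derivative-free Malliavin-weight formula with weight `π = u / (x σ_E T)`. -/
theorem energy_delta_independent
    (T σE σI : ℝ) (hT : 0 < T) (hσE : 0 < σE) (hσI : 0 < σI)
    (g h : ℝ → ℝ) (hg : Measurable g) (hh : Measurable h)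
    (C : ℝ) (p : ℕ) (hC : 0 ≤ C)
    (hgb : ∀ z : ℝ, |g z| ≤ C * (1 + |z|) ^ p)
    (hhb : ∀ z : ℝ, |h z| ≤ C * (1 + |z|) ^ p)
    (x y : ℝ) (hx : 0 < x) (hy : 0 < y) :
    HasDerivAt
      (fun x' : ℝ =>
        ∫ w : ℝ × ℝ,
          g (x' * Real.exp (σE * w.1 - σE ^ 2 * T / 2)) *
            h (y * Real.exp (σI * w.2 - σI ^ 2 * T / 2))
          ∂((gaussianReal 0 T.toNNReal).prod (gaussianReal 0 T.toNNReal)))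
      (∫ w : ℝ × ℝ,
          g (x * Real.exp (σE * w.1 - σE ^ 2 * T / 2)) *
            h (y * Real.exp (σI * w.2 - σI ^ 2 * T / 2)) *
            (w.1 / (x * σE * T))
        ∂((gaussianReal 0 T.toNNReal).prod (gaussianReal 0 T.toNNReal)))
      x := by
  have e1 : ∀ x' : ℝ, (∫ w : ℝ × ℝ,
          g (x' * Real.exp (σE * w.1 - σE ^ 2 * T / 2)) *
            h (y * Real.exp (σI * w.2 - σI ^ 2 * T / 2))
          ∂((gaussianReal 0 T.toNNReal).prod (gaussianReal 0 T.toNNReal)))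
      = (∫ u, g (x' * Real.exp (σE * u - σE ^ 2 * T / 2)) ∂(gaussianReal 0 T.toNNReal)) *
        ∫ v, h (y * Real.exp (σI * v - σI ^ 2 * T / 2)) ∂(gaussianReal 0 T.toNNReal) :=
    fun x' => integral_prod_mul (fun u => g (x' * Real.exp (σE * u - σE ^ 2 * T / 2)))
      (fun v => h (y * Real.exp (σI * v - σI ^ 2 * T / 2)))
  have e2 : (∫ w : ℝ × ℝ,
          g (x * Real.exp (σE * w.1 - σE ^ 2 * T / 2)) *
            h (y * Real.exp (σI * w.2 - σI ^ 2 * T / 2)) * (w.1 / (x * σE * T))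
          ∂((gaussianReal 0 T.toNNReal).prod (gaussianReal 0 T.toNNReal)))
      = (∫ u, g (x * Real.exp (σE * u - σE ^ 2 * T / 2)) * (u / (x * σE * T))
          ∂(gaussianReal 0 T.toNNReal)) *
        ∫ v, h (y * Real.exp (σI * v - σI ^ 2 * T / 2)) ∂(gaussianReal 0 T.toNNReal) := by
    rw [← integral_prod_mul]
    congr 1
    ext w
    ring
  simp_rw [e1]
  rw [e2]
  exact (energy_one T σE hT hσE g hg C p hC hgb x hx).mul_const _
end

section
/- In the correlated lognormal futures model, for every initial energy price x > 0 the map x ↦ ∫∫ g(F^E(x,u))·h(F^I(y,u,v)) dμ(u,v) is differentiable at x, and its derivative (the energy delta in the correlated case) equals Δ_E = ∫∫ g(F^E(x,u))·h(F^I(y,u,v)) · (u − ρ·v/√(1−ρ²))/(x·σ_E·T) dμ(u,v), i.e. the Malliavin weight is π^{Δ_E}(u,v) = (u − (ρ/√(1−ρ²))·v)/(x σ_E T). -/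
open MeasureTheory ProbabilityTheory

/-- The product Gaussian has the product density with respect to Lebesgue measure. -/
lemma gprod_integral (T : ℝ) (hT : 0 < T) (f : ℝ × ℝ → ℝ) :
    ∫ w, f w ∂((gaussianReal 0 T.toNNReal).prod (gaussianReal 0 T.toNNReal)) =
      ∫ w : ℝ × ℝ, (gaussianPDFReal 0 T.toNNReal w.1 * gaussianPDFReal 0 T.toNNReal w.2) * f w := by
  have hT' : T.toNNReal ≠ 0 := by simpa using hT
  rw [gaussianReal_of_var_ne_zero 0 hT',
    prod_withDensity (measurable_gaussianPDF _ _) (measurable_gaussianPDF _ _),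
    integral_withDensity_eq_integral_toReal_smul]
  · rw [Measure.volume_eq_prod]
    simp [toReal_gaussianPDF]
  · exact ((measurable_gaussianPDF _ _).comp measurable_fst).mul
      ((measurable_gaussianPDF _ _).comp measurable_snd)
  · exact Filter.Eventually.of_forall fun w =>
      ENNReal.mul_lt_top gaussianPDF_lt_top gaussianPDF_lt_top

lemma pdf_shift (T : ℝ) (hT : 0 < T) (u s : ℝ) :
    gaussianPDFReal 0 T.toNNReal (u - s) =
      gaussianPDFReal 0 T.toNNReal u * Real.exp (s * u / T - s ^ 2 / (2 * T)) := by
  simp only [gaussianPDFReal, Real.coe_toNNReal T hT.le]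
  rw [mul_assoc _ (Real.exp _) (Real.exp _), ← Real.exp_add]
  congr 2
  field_simp
  ring

/-- Cameron-Martin formula for the product Gaussian. -/
lemma gprod_shift (T : ℝ) (hT : 0 < T) (K : ℝ × ℝ → ℝ) (a b : ℝ) :
    ∫ w, K (w.1 + a, w.2 + b) ∂((gaussianReal 0 T.toNNReal).prod (gaussianReal 0 T.toNNReal)) =
      Real.exp (- (a ^ 2 + b ^ 2) / (2 * T)) *
      ∫ w, K w * Real.exp ((a * w.1 + b * w.2) / T)
        ∂((gaussianReal 0 T.toNNReal).prod (gaussianReal 0 T.toNNReal)) := by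
  rw [gprod_integral T hT, gprod_integral T hT, ← integral_const_mul]
  rw [← integral_sub_right_eq_self _ ((a, b) : ℝ × ℝ)]
  congr 1
  ext w
  simp only [Prod.fst_sub, Prod.snd_sub, sub_add_cancel, pdf_shift T hT]
  have : Real.exp (a * w.1 / T - a ^ 2 / (2 * T)) * Real.exp (b * w.2 / T - b ^ 2 / (2 * T)) =
      Real.exp (- (a ^ 2 + b ^ 2) / (2 * T)) * Real.exp ((a * w.1 + b * w.2) / T) := by
    rw [← Real.exp_add, ← Real.exp_add]
    congr 1
    field_simp
    ring
  linear_combination (gaussianPDFReal 0 T.toNNReal w.1 * gaussianPDFReal 0 T.toNNReal w.2 * K w)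
    * this

lemma gprod_exp_integrable (T M : ℝ) :
    Integrable (fun w : ℝ × ℝ => Real.exp (M * (|w.1| + |w.2|)))
      ((gaussianReal 0 T.toNNReal).prod (gaussianReal 0 T.toNNReal)) := by
  have h1 : Integrable (fun u : ℝ => Real.exp (M * |u|)) (gaussianReal 0 T.toNNReal) :=
    integrable_exp_mul_abs (X := id) (integrable_exp_mul_gaussianReal M)
      (integrable_exp_mul_gaussianReal (-M))
  have := h1.mul_prod h1
  refine this.congr (Filter.Eventually.of_forall fun w => ?_)
  simp only
  rw [mul_add, Real.exp_add]

lemma lin_bound (p q u v : ℝ) : |p * u + q * v| ≤ (|p| + |q|) * (|u| + |v|) := by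
  calc |p * u + q * v| ≤ |p| * |u| + |q| * |v| := by
        simpa [abs_mul] using abs_add_le (p * u) (q * v)
    _ ≤ _ := by nlinarith [abs_nonneg p, abs_nonneg q, abs_nonneg u, abs_nonneg v,
        mul_nonneg (abs_nonneg p) (abs_nonneg v), mul_nonneg (abs_nonneg q) (abs_nonneg u)]

lemma gprod_deriv_zero (T : ℝ) (hT : 0 < T) (K : ℝ × ℝ → ℝ) (hK : Measurable K)
    (D M : ℝ) (hD : ∀ w, |K w| ≤ D * Real.exp (M * (|w.1| + |w.2|))) (p q : ℝ) :
    HasDerivAt (fun s : ℝ => ∫ w, K w * Real.exp (s * (p * w.1 + q * w.2))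
        ∂((gaussianReal 0 T.toNNReal).prod (gaussianReal 0 T.toNNReal)))
      (∫ w, K w * (p * w.1 + q * w.2)
        ∂((gaussianReal 0 T.toNNReal).prod (gaussianReal 0 T.toNNReal))) 0 := by
  set μ := (gaussianReal 0 T.toNNReal).prod (gaussianReal 0 T.toNNReal)
  set B := |p| + |q|
  have key := hasDerivAt_integral_of_dominated_loc_of_deriv_le (μ := μ) (𝕜 := ℝ)
    (F := fun s w => K w * Real.exp (s * (p * w.1 + q * w.2)))
    (F' := fun s w => K w * (Real.exp (s * (p * w.1 + q * w.2)) * (p * w.1 + q * w.2)))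
    (x₀ := 0) (s := Metric.ball 0 1)
    (bound := fun w => D * Real.exp ((M + 2 * B) * (|w.1| + |w.2|)))
    (Metric.ball_mem_nhds 0 one_pos) ?_ ?_ ?_ ?_ ?_ ?_
  · simpa using key.2
  · exact Filter.Eventually.of_forall fun s => by fun_prop
  · simp only [zero_mul, Real.exp_zero, mul_one]
    refine ((gprod_exp_integrable T M).const_mul D).mono' hK.aestronglyMeasurable ?_
    exact Filter.Eventually.of_forall fun w => by simpa using hD w
  · fun_prop
  · refine Filter.Eventually.of_forall fun w s hs => ?_
    have hs1 : |s| < 1 := by simpa using hs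
    set r := |w.1| + |w.2|
    set b := p * w.1 + q * w.2
    have hb : |b| ≤ B * r := lin_bound p q w.1 w.2
    have e1 : Real.exp (s * b) ≤ Real.exp (B * r) := by
      apply Real.exp_le_exp.2
      calc s * b ≤ |s| * |b| := by rw [← abs_mul]; exact le_abs_self _
        _ ≤ 1 * |b| := by gcongr
        _ ≤ _ := by linarith
    have e2 : |b| ≤ Real.exp (B * r) := by linarith [Real.add_one_le_exp (B * r)]
    rw [Real.norm_eq_abs, abs_mul, abs_mul, Real.abs_exp]
    calc |K w| * (Real.exp (s * b) * |b|)
        ≤ (D * Real.exp (M * r)) * (Real.exp (B * r) * Real.exp (B * r)) := by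
          have := (abs_nonneg _).trans (hD w)
          gcongr
          exact hD w
      _ = _ := by
          rw [mul_assoc, ← Real.exp_add, ← Real.exp_add]
          congr 2
          ring
  · exact (gprod_exp_integrable T _).const_mul D
  · refine Filter.Eventually.of_forall fun w s hs => ?_
    exact (((hasDerivAt_id s).mul_const (p * w.1 + q * w.2)).exp.const_mul (K w)).congr_deriv
      (by simp)

lemma gprod_deriv_shift (T : ℝ) (hT : 0 < T) (K : ℝ × ℝ → ℝ) (hK : Measurable K)
    (D M : ℝ) (hD : ∀ w, |K w| ≤ D * Real.exp (M * (|w.1| + |w.2|))) (k : ℝ) :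
    HasDerivAt (fun s : ℝ => ∫ w, K (w.1 + s, w.2 + -(k * s))
        ∂((gaussianReal 0 T.toNNReal).prod (gaussianReal 0 T.toNNReal)))
      (∫ w, K w * (1 / T * w.1 + -k / T * w.2)
        ∂((gaussianReal 0 T.toNNReal).prod (gaussianReal 0 T.toNNReal))) 0 := by
  have h1 := gprod_deriv_zero T hT K hK D M hD (1 / T) (-k / T)
  have h2 : HasDerivAt (fun s : ℝ => Real.exp (-(s ^ 2 + (-(k * s)) ^ 2) / (2 * T))) 0 0 := by
    have : HasDerivAt (fun s : ℝ => s ^ 2 * (-(1 + k ^ 2) / (2 * T))) 0 0 := by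
      exact ((hasDerivAt_pow 2 (0 : ℝ)).mul_const (-(1 + k ^ 2) / (2 * T))).congr_deriv (by simp)
    have h3 := this.exp
    rw [mul_zero] at h3
    refine h3.congr_of_eventuallyEq (Filter.Eventually.of_forall fun s => ?_)
    simp only
    congr 1
    ring
  have h4 := h2.mul h1
  simp only [zero_mul, zero_add] at h4
  refine (h4.congr_of_eventuallyEq (Filter.Eventually.of_forall fun s => ?_)).congr_deriv
    (by simp)
  simp only [Pi.mul_apply]
  rw [gprod_shift T hT K s (-(k * s))]
  congr 2
  ext w
  congr 2
  ring

lemma poly_bound (f : ℝ → ℝ) (C : ℝ) (p : ℕ) (hC : 0 ≤ C)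
    (hf : ∀ z : ℝ, |f z| ≤ C * (1 + |z|) ^ p) (x l c L : ℝ) (hx : 0 < x) (hl : |l| ≤ L) :
    |f (x * Real.exp (l - c))| ≤ C * (1 + x * Real.exp (-c)) ^ p * Real.exp (p * L) := by
  refine (hf _).trans ?_
  have hL : 0 ≤ L := (abs_nonneg _).trans hl
  have h1 : 1 + |x * Real.exp (l - c)| ≤ (1 + x * Real.exp (-c)) * Real.exp L := by
    rw [abs_of_pos (by positivity), sub_eq_add_neg, Real.exp_add]
    have e1 : Real.exp l ≤ Real.exp L := Real.exp_le_exp.2 ((le_abs_self l).trans hl)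
    have e2 : 1 ≤ Real.exp L := Real.one_le_exp hL
    have : 0 ≤ x * Real.exp (-c) := by positivity
    nlinarith
  rw [mul_assoc, Real.exp_nat_mul, ← mul_pow]
  gcongr

/-- **Energy delta in the correlated lognormal futures model.**
With `Fᴱ(x,u) = x·exp(σ_E u − σ_E² T/2)` and
`Fᴵ(y,u,v) = y·exp(σ_I (ρu + √(1−ρ²) v) − σ_I² T/2)` driven by two independent Brownian
motions, for every `x > 0` the quanto price is differentiable in `x` with derivative given
by the Malliavin weight `(u − (ρ/√(1−ρ²)) v) / (x σ_E T)`. -/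
theorem energy_delta_correlated
    (T σE σI ρ : ℝ) (hT : 0 < T) (hσE : 0 < σE) (hσI : 0 < σI)
    (hρ : ρ ∈ Set.Ioo (-1 : ℝ) 1)
    (g h : ℝ → ℝ) (hg : Measurable g) (hh : Measurable h)
    (C : ℝ) (p : ℕ) (hC : 0 ≤ C)
    (hgb : ∀ z : ℝ, |g z| ≤ C * (1 + |z|) ^ p)
    (hhb : ∀ z : ℝ, |h z| ≤ C * (1 + |z|) ^ p)
    (x y : ℝ) (hx : 0 < x) (hy : 0 < y) :
    HasDerivAt
      (fun x' : ℝ =>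
        ∫ w : ℝ × ℝ,
          g (x' * Real.exp (σE * w.1 - σE ^ 2 * T / 2)) *
            h (y * Real.exp (σI * (ρ * w.1 + Real.sqrt (1 - ρ ^ 2) * w.2) - σI ^ 2 * T / 2))
          ∂((gaussianReal 0 T.toNNReal).prod (gaussianReal 0 T.toNNReal)))
      (∫ w : ℝ × ℝ,
          g (x * Real.exp (σE * w.1 - σE ^ 2 * T / 2)) *
            h (y * Real.exp (σI * (ρ * w.1 + Real.sqrt (1 - ρ ^ 2) * w.2) - σI ^ 2 * T / 2)) *
            ((w.1 - ρ * w.2 / Real.sqrt (1 - ρ ^ 2)) / (x * σE * T))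
        ∂((gaussianReal 0 T.toNNReal).prod (gaussianReal 0 T.toNNReal)))
      x := by
  have hρ2 : 0 < 1 - ρ ^ 2 := by nlinarith [hρ.1, hρ.2]
  have hr : 0 < Real.sqrt (1 - ρ ^ 2) := Real.sqrt_pos.2 hρ2
  set r := Real.sqrt (1 - ρ ^ 2)
  set K : ℝ × ℝ → ℝ := fun w => g (x * Real.exp (σE * w.1 - σE ^ 2 * T / 2)) *
            h (y * Real.exp (σI * (ρ * w.1 + r * w.2) - σI ^ 2 * T / 2)) with hKdef
  have hK : Measurable K := by
    apply Measurable.mul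
    · exact hg.comp (by fun_prop)
    · exact hh.comp (by fun_prop)
  have hD : ∀ w, |K w| ≤
      (C * (1 + x * Real.exp (-(σE ^ 2 * T / 2))) ^ p *
        (C * (1 + y * Real.exp (-(σI ^ 2 * T / 2))) ^ p)) *
      Real.exp ((p * (|σE| + |0|) + p * (|σI * ρ| + |σI * r|)) * (|w.1| + |w.2|)) := by
    intro w
    have b1 := poly_bound g C p hC hgb x (σE * w.1) (σE ^ 2 * T / 2) _ hx
      (by simpa using lin_bound σE 0 w.1 w.2)
    have b2 := poly_bound h C p hC hhb y (σI * (ρ * w.1 + r * w.2)) (σI ^ 2 * T / 2)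
      ((|σI * ρ| + |σI * r|) * (|w.1| + |w.2|)) hy
      (by
        have := lin_bound (σI * ρ) (σI * r) w.1 w.2
        rwa [show σI * ρ * w.1 + σI * r * w.2 = σI * (ρ * w.1 + r * w.2) by ring] at this)
    rw [hKdef, abs_mul]
    refine (mul_le_mul b1 b2 (abs_nonneg _) ((abs_nonneg _).trans b1)).trans_eq ?_
    rw [add_mul (p * (|σE| + |0|) : ℝ), Real.exp_add, mul_assoc (p : ℝ), mul_assoc (p : ℝ)]
    simp only [abs_zero, add_zero]
    ring
  have main := gprod_deriv_shift T hT K hK _ _ hD (ρ / r)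
  have hs : HasDerivAt (fun x' : ℝ => (Real.log x' - Real.log x) / σE) (x⁻¹ / σE) x :=
    ((Real.hasDerivAt_log hx.ne').sub_const _).div_const _
  have h0 : (Real.log x - Real.log x) / σE = 0 := by simp
  have comp := HasDerivAt.comp x (h₂ := fun s : ℝ => ∫ w, K (w.1 + s, w.2 + -(ρ / r * s))
        ∂((gaussianReal 0 T.toNNReal).prod (gaussianReal 0 T.toNNReal))) (by rw [h0]; exact main) hs
  refine (comp.congr_of_eventuallyEq ?_).congr_deriv ?_
  · filter_upwards [lt_mem_nhds hx] with x' hx'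
    simp only [Function.comp]
    congr 1
    ext w
    simp only [hKdef]
    congr 2
    · have : x' = x * Real.exp (Real.log x' - Real.log x) := by
        rw [Real.exp_sub, Real.exp_log hx', Real.exp_log hx]
        field_simp
      conv_lhs => rw [this]
      rw [mul_assoc, ← Real.exp_add]
      congr 2
      field_simp
      ring
    · congr 2
      field_simp
      ring
  · rw [← integral_mul_const]
    congr 1
    ext w
    rw [mul_assoc]
    congr 1
    field_simp
    ring
end

section
/- In the correlated lognormal futures model, the quanto option price C(x,y) = ∫∫ g(F^E(x,u))·h(F^I(y,u,v)) dμ(u,v) has a mixed second partial derivative in the two initial prices (the cross-gamma Δ_{EI} = ∂²C/∂x∂y) at every x > 0, y > 0, given by Δ_{EI} = ∫∫ g(F^E(x,u))·h(F^I(y,u,v)) · [ (u − ρ·v/√(1−ρ²))·v/(x·y·σ_E·σ_I·√(1−ρ²)·T²) + ρ/(x·y·σ_E·σ_I·(1−ρ²)·T) ] dμ(u,v); that is, the cross-gamma Malliavin weight is the product of the energy-delta weight (u − (ρ/√(1−ρ²))v)/(x σ_E T) and the temperature-delta weight v/(y σ_I √(1−ρ²) T), plus the Skorohod correction term ρ/(x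 y σ_E σ_I (1−ρ²) T) coming from the Malliavin derivative of the energy-delta weight in the W̃^I direction. -/
open MeasureTheory ProbabilityTheory

lemma cg_gauss_shift (T : ℝ) (hT : 0 < T) (a : ℝ) :
    gaussianReal a T.toNNReal = (gaussianReal 0 T.toNNReal).withDensity
      (fun u => ENNReal.ofReal (Real.exp (a * u / T - a ^ 2 / (2 * T)))) := by
  have hv : T.toNNReal ≠ 0 := by simpa using hT
  rw [gaussianReal_of_var_ne_zero _ hv, gaussianReal_of_var_ne_zero _ hv,
    ← withDensity_mul _ (measurable_gaussianPDF _ _) (by fun_prop)]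
  congr 1
  ext u
  simp only [gaussianPDF_def, Pi.mul_apply, gaussianPDFReal_def]
  rw [← ENNReal.ofReal_mul (by positivity), mul_assoc (Real.sqrt _)⁻¹ (Real.exp _) (Real.exp _),
    ← Real.exp_add, Real.coe_toNNReal T hT.le]
  congr 3
  field_simp
  ring

lemma cg_cameron_martin (T : ℝ) (hT : 0 < T) (a b : ℝ) (f : ℝ × ℝ → ℝ) :
    ∫ w : ℝ × ℝ, f (w.1 + a, w.2 + b)
      ∂((gaussianReal 0 T.toNNReal).prod (gaussianReal 0 T.toNNReal)) =
    ∫ w : ℝ × ℝ, Real.exp (a * w.1 / T - a ^ 2 / (2 * T)) *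
      Real.exp (b * w.2 / T - b ^ 2 / (2 * T)) * f w
      ∂((gaussianReal 0 T.toNNReal).prod (gaussianReal 0 T.toNNReal)) := by
  have e : MeasurableEmbedding (fun w : ℝ × ℝ => (w.1 + a, w.2 + b)) :=
    (measurableEmbedding_addRight a).prodMap (measurableEmbedding_addRight b)
  have hm : ((gaussianReal 0 T.toNNReal).prod (gaussianReal 0 T.toNNReal)).map
      (fun w : ℝ × ℝ => (w.1 + a, w.2 + b)) =
      (gaussianReal a T.toNNReal).prod (gaussianReal b T.toNNReal) := by
    have := Measure.map_prod_map (gaussianReal 0 T.toNNReal) (gaussianReal 0 T.toNNReal)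
      (measurable_add_const a) (measurable_add_const b)
    rw [gaussianReal_map_add_const, gaussianReal_map_add_const, zero_add, zero_add] at this
    exact this.symm
  rw [← e.integral_map, hm, cg_gauss_shift T hT a, cg_gauss_shift T hT b,
    prod_withDensity (by fun_prop) (by fun_prop),
    integral_withDensity_eq_integral_toReal_smul (by fun_prop)
      (Filter.Eventually.of_forall fun w => ENNReal.mul_lt_top (by simp) (by simp))]
  refine integral_congr_ae (Filter.Eventually.of_forall fun w => ?_)
  simp only [ENNReal.toReal_mul, smul_eq_mul]
  rw [ENNReal.toReal_ofReal (by positivity), ENNReal.toReal_ofReal (by positivity)]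

lemma cg_hasDerivAt {Ω : Type*} [MeasurableSpace Ω] (μ : Measure Ω) (H X : Ω → ℝ)
    (hX : Measurable X)
    (hi : ∀ t : ℝ, Integrable (fun w => H w * Real.exp (t * X w)) μ) (t : ℝ) :
    Integrable (fun w => H w * X w * Real.exp (t * X w)) μ ∧
    HasDerivAt (fun t => ∫ w, H w * Real.exp (t * X w) ∂μ)
      (∫ w, H w * X w * Real.exp (t * X w) ∂μ) t := by
  have hH : AEStronglyMeasurable H μ := by simpa using (hi 0).aestronglyMeasurable
  have hb : Integrable (fun w => |H w * Real.exp ((t + 2) * X w)| + 2 * |H w * Real.exp (t * X w)|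
      + |H w * Real.exp ((t - 2) * X w)|) μ :=
    ((hi (t + 2)).abs.add ((hi t).abs.const_mul 2)).add (hi (t - 2)).abs
  refine hasDerivAt_integral_of_dominated_loc_of_deriv_le
    (F := fun t w => H w * Real.exp (t * X w))
    (F' := fun t w => H w * X w * Real.exp (t * X w)) (Metric.ball_mem_nhds t one_pos)
    (Filter.Eventually.of_forall fun s => (hi s).aestronglyMeasurable) (hi t)
    ((hH.mul hX.aestronglyMeasurable).mul (by fun_prop))
    (Filter.Eventually.of_forall fun w s hs => ?_) hb
    (Filter.Eventually.of_forall fun w s hs => ?_)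
  · simp only [Real.norm_eq_abs, abs_mul, Real.abs_exp]
    rw [Metric.mem_ball, Real.dist_eq, abs_lt] at hs
    have h1 : |X w| ≤ Real.exp (X w) + Real.exp (-X w) := by
      have := Real.add_one_le_exp (X w)
      have := Real.add_one_le_exp (-X w)
      have := Real.exp_pos (X w)
      have := Real.exp_pos (-X w)
      exact abs_le.2 ⟨by linarith, by linarith⟩
    have h2 : Real.exp (s * X w) ≤ Real.exp ((t + 1) * X w) + Real.exp ((t - 1) * X w) := by
      rcases le_total 0 (X w) with h | h
      · have : Real.exp (s * X w) ≤ Real.exp ((t + 1) * X w) :=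
          Real.exp_le_exp.2 (by nlinarith)
        linarith [Real.exp_pos ((t - 1) * X w)]
      · have : Real.exp (s * X w) ≤ Real.exp ((t - 1) * X w) :=
          Real.exp_le_exp.2 (by nlinarith)
        linarith [Real.exp_pos ((t + 1) * X w)]
    have e1 : Real.exp ((t + 2) * X w) = Real.exp (X w) * Real.exp ((t + 1) * X w) := by
      rw [← Real.exp_add]; ring_nf
    have e2 : Real.exp (t * X w) = Real.exp (X w) * Real.exp ((t - 1) * X w) := by
      rw [← Real.exp_add]; ring_nf
    have e3 : Real.exp (t * X w) = Real.exp (-X w) * Real.exp ((t + 1) * X w) := by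
      rw [← Real.exp_add]; ring_nf
    have e4 : Real.exp ((t - 2) * X w) = Real.exp (-X w) * Real.exp ((t - 1) * X w) := by
      rw [← Real.exp_add]; ring_nf
    calc |H w| * |X w| * Real.exp (s * X w)
        ≤ |H w| * (Real.exp (X w) + Real.exp (-X w)) *
          (Real.exp ((t + 1) * X w) + Real.exp ((t - 1) * X w)) := by gcongr
      _ = _ := by rw [two_mul]; nth_rewrite 2 [e3]; rw [e1, e2, e4]; ring
  · have := (((hasDerivAt_id s).mul_const (X w)).exp).const_mul (H w)
    refine this.congr_deriv ?_
    simp only [id]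
    ring

lemma cg_final (F M : ℝ → ℝ → ℝ) (M1 : ℝ → ℝ) (M12 M2 A B D x y : ℝ) (hx : 0 < x) (hy : 0 < y)
    (hF : ∀ x' y', 0 < x' → 0 < y' → F x' y' =
      Real.exp (-(A * (Real.log x' - Real.log x) ^ 2
        + B * (Real.log x' - Real.log x) * (Real.log y' - Real.log y)
        + D * (Real.log y' - Real.log y) ^ 2)) *
      M (Real.log x' - Real.log x) (Real.log y' - Real.log y))
    (h1 : ∀ q, HasDerivAt (fun r => M r q) (M1 q) 0)
    (h12 : HasDerivAt M1 M12 0) (h2 : HasDerivAt (M 0) M2 0) :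
    (∀ y', 0 < y' → DifferentiableAt ℝ (fun x' => F x' y') x) ∧
    HasDerivAt (fun y' => deriv (fun x' => F x' y') x) ((M12 - B * M 0 0) / (x * y)) y := by
  have key : ∀ y', 0 < y' → HasDerivAt (fun x' => F x' y')
      (Real.exp (-(D * (Real.log y' - Real.log y) ^ 2)) *
        (M1 (Real.log y' - Real.log y) - B * (Real.log y' - Real.log y) *
          M 0 (Real.log y' - Real.log y)) / x) x := by
    intro y' hy'
    have hr : HasDerivAt (fun x' => Real.log x' - Real.log x) x⁻¹ x :=
      (Real.hasDerivAt_log hx.ne').sub_const _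
    set q := Real.log y' - Real.log y with hq
    have h1' : HasDerivAt (fun r => M r q) (M1 q) (Real.log x - Real.log x) := by
      rw [sub_self]; exact h1 q
    have hM := HasDerivAt.comp x h1' hr
    have hE := (((((hr.pow 2).const_mul A).add ((hr.const_mul B).mul_const q)).add_const
      (D * q ^ 2)).neg).exp
    have := hE.mul hM
    refine (this.congr_of_eventuallyEq ?_).congr_deriv ?_
    · filter_upwards [lt_mem_nhds hx] with x' hx'
      rw [hF x' y' hx' hy']
      rfl
    · simp
      field_simp
      ring
  refine ⟨fun y' hy' => (key y' hy').differentiableAt, ?_⟩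
  have hr : HasDerivAt (fun y' => Real.log y' - Real.log y) y⁻¹ y :=
      (Real.hasDerivAt_log hy.ne').sub_const _
  have h12' : HasDerivAt M1 M12 (Real.log y - Real.log y) := by rw [sub_self]; exact h12
  have h2' : HasDerivAt (M 0) M2 (Real.log y - Real.log y) := by rw [sub_self]; exact h2
  have := (((((hr.pow 2).const_mul D).neg).exp).mul
    ((HasDerivAt.comp y h12' hr).sub ((hr.const_mul B).mul (HasDerivAt.comp y h2' hr)))).div_const x
  refine (this.congr_of_eventuallyEq ?_).congr_deriv ?_
  · filter_upwards [lt_mem_nhds hy] with y' hy'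
    rw [(key y' hy').deriv]
    rfl
  · simp
    field_simp

lemma cg_exp_int (T k : ℝ) : Integrable (fun w : ℝ × ℝ => Real.exp (k * (|w.1| + |w.2|)))
    ((gaussianReal 0 T.toNNReal).prod (gaussianReal 0 T.toNNReal)) := by
  have h1 : Integrable (fun u : ℝ => Real.exp (k * |u|)) (gaussianReal 0 T.toNNReal) :=
    integrable_exp_mul_abs (X := fun u => u) (integrable_exp_mul_gaussianReal k)
      (integrable_exp_mul_gaussianReal (-k))
  refine (h1.mul_prod h1).congr (Filter.Eventually.of_forall fun w => ?_)
  simp only [← Real.exp_add]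
  ring_nf

lemma cg_growth (g : ℝ → ℝ) (C : ℝ) (p : ℕ) (hC : 0 ≤ C)
    (hgb : ∀ z : ℝ, |g z| ≤ C * (1 + |z|) ^ p) (x : ℝ) (hx : 0 < x) (m : ℝ) :
    |g (x * Real.exp m)| ≤ C * (1 + x) ^ p * Real.exp (p * |m|) := by
  refine (hgb _).trans ?_
  rw [mul_assoc, Real.exp_nat_mul, ← mul_pow]
  have h1 : Real.exp m ≤ Real.exp |m| := Real.exp_le_exp.2 (le_abs_self m)
  have h2 : 1 ≤ Real.exp |m| := Real.one_le_exp (abs_nonneg m)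
  have : 1 + |x * Real.exp m| ≤ (1 + x) * Real.exp |m| := by
    rw [abs_of_pos (by positivity)]
    nlinarith
  gcongr

lemma cg_int (T : ℝ) (g h : ℝ → ℝ) (hg : Measurable g) (hh : Measurable h)
    (C : ℝ) (p : ℕ) (hC : 0 ≤ C)
    (hgb : ∀ z : ℝ, |g z| ≤ C * (1 + |z|) ^ p)
    (hhb : ∀ z : ℝ, |h z| ≤ C * (1 + |z|) ^ p)
    (x y : ℝ) (hx : 0 < x) (hy : 0 < y) (a₁ a₂ a₃ b₁ b₂ b₃ c₁ c₂ : ℝ) :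
    Integrable (fun w : ℝ × ℝ => g (x * Real.exp (a₁ * w.1 + a₂ * w.2 + a₃)) *
      h (y * Real.exp (b₁ * w.1 + b₂ * w.2 + b₃)) * Real.exp (c₁ * w.1 + c₂ * w.2))
    ((gaussianReal 0 T.toNNReal).prod (gaussianReal 0 T.toNNReal)) := by
  have hlin : ∀ (a b : ℝ) (w : ℝ × ℝ), |a * w.1 + b * w.2| ≤ (|a| + |b|) * (|w.1| + |w.2|) := by
    intro a b w
    have := abs_add_le (a * w.1) (b * w.2)
    rw [abs_mul, abs_mul] at this
    nlinarith [abs_nonneg a, abs_nonneg b, abs_nonneg w.1, abs_nonneg w.2,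
      mul_nonneg (abs_nonneg a) (abs_nonneg w.2), mul_nonneg (abs_nonneg b) (abs_nonneg w.1)]
  set K := C * (1 + x) ^ p * (C * (1 + y) ^ p) * Real.exp (p * |a₃| + p * |b₃|) with hK
  have hb := (cg_exp_int T (p * (|a₁| + |a₂|) + p * (|b₁| + |b₂|) + (|c₁| + |c₂|))).const_mul K
  refine hb.mono' (by fun_prop) (Filter.Eventually.of_forall fun w => ?_)
  rw [Real.norm_eq_abs, abs_mul, abs_mul, Real.abs_exp]
  have hgg := cg_growth g C p hC hgb x hx (a₁ * w.1 + a₂ * w.2 + a₃)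
  have hhh := cg_growth h C p hC hhb y hy (b₁ * w.1 + b₂ * w.2 + b₃)
  calc _ ≤ (C * (1 + x) ^ p * Real.exp (p * |a₁ * w.1 + a₂ * w.2 + a₃|)) *
        (C * (1 + y) ^ p * Real.exp (p * |b₁ * w.1 + b₂ * w.2 + b₃|)) *
        Real.exp (c₁ * w.1 + c₂ * w.2) := by gcongr
    _ = C * (1 + x) ^ p * (C * (1 + y) ^ p) * Real.exp (p * |a₁ * w.1 + a₂ * w.2 + a₃| +
        p * |b₁ * w.1 + b₂ * w.2 + b₃| + (c₁ * w.1 + c₂ * w.2)) := by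
        rw [Real.exp_add (_ + _) (_ + _), Real.exp_add (p * |_|) (p * |_|)]; ring
    _ ≤ C * (1 + x) ^ p * (C * (1 + y) ^ p) * Real.exp ((p * |a₃| + p * |b₃|) +
        (p * (|a₁| + |a₂|) + p * (|b₁| + |b₂|) + (|c₁| + |c₂|)) * (|w.1| + |w.2|)) := by
        have hp : (0 : ℝ) ≤ p := p.cast_nonneg
        have i1 : |a₁ * w.1 + a₂ * w.2 + a₃| ≤ (|a₁| + |a₂|) * (|w.1| + |w.2|) + |a₃| :=
          (abs_add_le _ _).trans (by linarith [hlin a₁ a₂ w])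
        have i2 : |b₁ * w.1 + b₂ * w.2 + b₃| ≤ (|b₁| + |b₂|) * (|w.1| + |w.2|) + |b₃| :=
          (abs_add_le _ _).trans (by linarith [hlin b₁ b₂ w])
        have i3 := (le_abs_self _).trans (hlin c₁ c₂ w)
        have j1 := mul_le_mul_of_nonneg_left i1 hp
        have j2 := mul_le_mul_of_nonneg_left i2 hp
        exact mul_le_mul_of_nonneg_left (Real.exp_le_exp.2 (by linarith)) (by positivity)
    _ = _ := by rw [hK, Real.exp_add]; ring

/-- **Cross-gamma in the correlated lognormal futures model.**
The quanto option price `C(x,y) = ∫∫ g(Fᴱ(x,u)) h(Fᴵ(y,u,v)) dμ(u,v)` has a mixed second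
partial derivative `∂²C/∂x∂y` at every `x > 0`, `y > 0`: for each fixed `y' > 0` the map
`x ↦ C(x,y')` is differentiable at `x`, and `y' ↦ ∂C/∂x(x,y')` is differentiable at `y`,
with derivative given by the product of the energy-delta weight
`(u − (ρ/√(1−ρ²)) v)/(x σ_E T)` and the temperature-delta weight `v/(y σ_I √(1−ρ²) T)`,
plus the Skorohod correction `ρ/(x y σ_E σ_I (1−ρ²) T)`. -/
theorem cross_gamma_correlated
    (T σE σI ρ : ℝ) (hT : 0 < T) (hσE : 0 < σE) (hσI : 0 < σI)
    (hρ : ρ ∈ Set.Ioo (-1 : ℝ) 1)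
    (g h : ℝ → ℝ) (hg : Measurable g) (hh : Measurable h)
    (C : ℝ) (p : ℕ) (hC : 0 ≤ C)
    (hgb : ∀ z : ℝ, |g z| ≤ C * (1 + |z|) ^ p)
    (hhb : ∀ z : ℝ, |h z| ≤ C * (1 + |z|) ^ p)
    (x y : ℝ) (hx : 0 < x) (hy : 0 < y) :
    (∀ y' : ℝ, 0 < y' →
      DifferentiableAt ℝ
        (fun x' : ℝ =>
          ∫ w : ℝ × ℝ,
            g (x' * Real.exp (σE * w.1 - σE ^ 2 * T / 2)) *
              h (y' * Real.exp (σI * (ρ * w.1 + Real.sqrt (1 - ρ ^ 2) * w.2) - σI ^ 2 * T / 2))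
            ∂((gaussianReal 0 T.toNNReal).prod (gaussianReal 0 T.toNNReal))) x) ∧
    HasDerivAt
      (fun y' : ℝ =>
        deriv
          (fun x' : ℝ =>
            ∫ w : ℝ × ℝ,
              g (x' * Real.exp (σE * w.1 - σE ^ 2 * T / 2)) *
                h (y' * Real.exp (σI * (ρ * w.1 + Real.sqrt (1 - ρ ^ 2) * w.2) - σI ^ 2 * T / 2))
              ∂((gaussianReal 0 T.toNNReal).prod (gaussianReal 0 T.toNNReal))) x)
      (∫ w : ℝ × ℝ,
          g (x * Real.exp (σE * w.1 - σE ^ 2 * T / 2)) *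
            h (y * Real.exp (σI * (ρ * w.1 + Real.sqrt (1 - ρ ^ 2) * w.2) - σI ^ 2 * T / 2)) *
            ((w.1 - ρ * w.2 / Real.sqrt (1 - ρ ^ 2)) * w.2 /
                (x * y * σE * σI * Real.sqrt (1 - ρ ^ 2) * T ^ 2) +
              ρ / (x * y * σE * σI * (1 - ρ ^ 2) * T))
        ∂((gaussianReal 0 T.toNNReal).prod (gaussianReal 0 T.toNNReal)))
      y := by
  have hs2 : 0 < 1 - ρ ^ 2 := by nlinarith [hρ.1, hρ.2]
  have hspos : 0 < Real.sqrt (1 - ρ ^ 2) := Real.sqrt_pos.2 hs2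
  have hsq : Real.sqrt (1 - ρ ^ 2) ^ 2 = 1 - ρ ^ 2 := Real.sq_sqrt hs2.le
  set s := Real.sqrt (1 - ρ ^ 2) with hs
  clear_value s
  rw [← hsq]
  set μ := (gaussianReal 0 T.toNNReal).prod (gaussianReal 0 T.toNNReal) with hμ
  let G : ℝ × ℝ → ℝ := fun w => g (x * Real.exp (σE * w.1 - σE ^ 2 * T / 2)) *
    h (y * Real.exp (σI * (ρ * w.1 + s * w.2) - σI ^ 2 * T / 2))
  let X : ℝ × ℝ → ℝ := fun w => (w.1 - ρ * w.2 / s) / (σE * T)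
  let Y : ℝ × ℝ → ℝ := fun w => w.2 / (s * σI * T)
  have hX : Measurable X := by fun_prop
  have hY : Measurable Y := by fun_prop
  have hint : ∀ a b : ℝ, Integrable (fun w => G w * Real.exp (b * Y w) * Real.exp (a * X w)) μ := by
    intro a b
    refine (cg_int T g h hg hh C p hC hgb hhb x y hx hy σE 0 (-(σE ^ 2 * T / 2))
      (σI * ρ) (σI * s) (-(σI ^ 2 * T / 2)) (a / (σE * T))
      (b / (s * σI * T) - a * ρ / (s * (σE * T)))).congr (Filter.Eventually.of_forall fun w => ?_)
    simp only [G, X, Y]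
    rw [mul_assoc _ (Real.exp _) (Real.exp _), ← Real.exp_add]
    congr 2
    · congr 3
      ring_nf
    · congr 3
      ring_nf
    · field_simp
      ring
  have hXint : ∀ q : ℝ, Integrable (fun w => G w * X w * Real.exp (q * Y w)) μ := by
    intro q
    refine (cg_hasDerivAt μ (fun w => G w * Real.exp (q * Y w)) X hX
      (fun t => hint t q) 0).1.congr (Filter.Eventually.of_forall fun w => ?_)
    simp only [zero_mul, Real.exp_zero]
    ring
  have hGint : ∀ q : ℝ, Integrable (fun w => G w * Real.exp (q * Y w)) μ := by
    intro q
    simpa using hint 0 q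
  have hd1 : ∀ q : ℝ, HasDerivAt
      (fun r => ∫ w, G w * Real.exp (q * Y w) * Real.exp (r * X w) ∂μ)
      (∫ w, G w * X w * Real.exp (q * Y w) ∂μ) 0 := by
    intro q
    refine (cg_hasDerivAt μ (fun w => G w * Real.exp (q * Y w)) X hX
      (fun t => hint t q) 0).2.congr_deriv
        (integral_congr_ae (Filter.Eventually.of_forall fun w => ?_))
    simp only [zero_mul, Real.exp_zero]
    ring
  have hd12 := (cg_hasDerivAt μ (fun w => G w * X w) Y hY hXint 0)
  have hd2 := (cg_hasDerivAt μ G Y hY hGint 0).2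
  have hfin := cg_final
    (fun x' y' => ∫ w : ℝ × ℝ, g (x' * Real.exp (σE * w.1 - σE ^ 2 * T / 2)) *
      h (y' * Real.exp (σI * (ρ * w.1 + s * w.2) - σI ^ 2 * T / 2)) ∂μ)
    (fun r q => ∫ w, G w * Real.exp (q * Y w) * Real.exp (r * X w) ∂μ)
    (fun q => ∫ w, G w * X w * Real.exp (q * Y w) ∂μ) _ _
    ((1 + ρ ^ 2 / s ^ 2) / (2 * T * σE ^ 2)) (-(ρ / (s ^ 2 * σE * σI * T)))
    (1 / (2 * T * s ^ 2 * σI ^ 2)) x y hx hy ?_ hd1 hd12.2 (by simpa using hd2)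
  · refine ⟨hfin.1, hfin.2.congr_deriv ?_⟩
    have hI : Integrable (fun w => G w * X w * Y w) μ := by simpa using hd12.1
    have hG0 : Integrable G μ := by simpa using hGint 0
    simp only [zero_mul, Real.exp_zero, mul_one]
    rw [← integral_const_mul, ← integral_sub hI (hG0.const_mul _), ← integral_div]
    refine integral_congr_ae (Filter.Eventually.of_forall fun w => ?_)
    simp only [G, X, Y]
    field_simp
    ring
  · intro x' y' hx' hy'
    set r := Real.log x' - Real.log x with hr
    set q := Real.log y' - Real.log y with hq
    have ex : x' = x * Real.exp r := by
      rw [hr, Real.exp_sub, Real.exp_log hx', Real.exp_log hx]; field_simp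
    have ey : y' = y * Real.exp q := by
      rw [hq, Real.exp_sub, Real.exp_log hy', Real.exp_log hy]; field_simp
    clear_value r q
    have cm := cg_cameron_martin T hT (r / σE) ((q / σI - ρ * (r / σE)) / s) G
    calc _ = ∫ w : ℝ × ℝ, G (w.1 + r / σE, w.2 + (q / σI - ρ * (r / σE)) / s) ∂μ := by
          refine integral_congr_ae (Filter.Eventually.of_forall fun w => ?_)
          simp only [G]
          rw [ex, ey, mul_assoc x, mul_assoc y, ← Real.exp_add, ← Real.exp_add]
          congr 4
          · field_simp
            ring
          · field_simp
            ring
      _ = _ := cm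
      _ = _ := by
          rw [← integral_const_mul]
          refine integral_congr_ae (Filter.Eventually.of_forall fun w => ?_)
          simp only [X, Y]
          generalize G w = G0
          rw [← Real.exp_add, mul_assoc G0, ← Real.exp_add, mul_left_comm _ G0, ← Real.exp_add,
            mul_comm G0]
          congr 2
          field_simp
          ring
end
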